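/- The equation (2^n − 1)(3^n − 1) = x^2 has no solution in positive integers n, x. -/

import Mathlib

/-!
Let `a` be even, `b ≡ 3 [ZMOD 4]` and `2` a nonsquare modulo `b`; every `b` congruent to `3` modulo
`8` qualifies. For odd `n` the product `(a ^ n - 1) * (b ^ n - 1)` is `2` modulo `4`, so it is not a
square.

If it is a nonzero square for `n = 2 * k`, its factors are `d * y ^ 2` and `d * z ^ 2`, so up to
sign `a ^ k` and `b ^ k` are `x`-coordinates `x_m` and `x_l` of powers of the fundamental
solution `(x_1, y_1)` of `X ^ 2 - d * Y ^ 2 = 1`. If `x_1` were odd, so would be `x_m`; hence `x_1`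
is even. As `x_1 ∣ x_l` for odd `l`, while `b` is odd, `l = 2 * r` is even. Then `b` divides
`x_l = 2 * x_r ^ 2 - 1`, and `2` is a square modulo `b`.
-/

open Pell

theorem exists_eq_mul_sq_of_mul_eq_sq {R : Type*} [CommRing R] [IsDomain R] [GCDMonoid R]
    {a b c : R} (h : a * b = c ^ 2) : ∃ d y z : R, a = d * y ^ 2 ∧ b = d * z ^ 2 := by
  obtain rfl | ha := eq_or_ne a 0
  · exact ⟨b, 0, 1, by simp, by simp⟩
  obtain ⟨a', b', ha', hb', hcoprime⟩ := extract_gcd a b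
  set g := gcd a b
  have hg : g ≠ 0 := left_ne_zero_of_mul (ha' ▸ ha)
  have hgc : g ∣ c := by
    rw [← IsIntegrallyClosed.pow_dvd_pow_iff two_ne_zero, ← h, sq]
    exact mul_dvd_mul (gcd_dvd_left a b) (gcd_dvd_right a b)
  obtain ⟨c', rfl⟩ := hgc
  have hc' : a' * b' = c' ^ 2 := by
    apply mul_left_cancel₀ (pow_ne_zero 2 hg)
    rw [← mul_pow, ← h, ha', hb', mul_mul_mul_comm, sq]
  obtain ⟨y, u, hy⟩ := exists_associated_pow_of_mul_eq_pow hcoprime hc'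
  have hy0 : y ≠ 0 := by
    rintro rfl
    simp [ha', ← hy] at ha
  have hyc : y ∣ c' := by
    rw [← IsIntegrallyClosed.pow_dvd_pow_iff two_ne_zero, ← hc', ← hy, mul_assoc]
    exact dvd_mul_right _ _
  obtain ⟨v, rfl⟩ := hyc
  have hv : u * b' = v ^ 2 := by
    apply mul_left_cancel₀ (pow_ne_zero 2 hy0)
    rw [← mul_assoc, hy, hc', mul_pow]
  refine ⟨g * u, y, ↑u⁻¹ * v, by rw [ha', ← hy, mul_assoc, mul_comm (u : R)], ?_⟩
  rw [hb', mul_pow, ← hv, sq, mul_assoc, mul_assoc, u.inv_mul_cancel_left, u.mul_inv_cancel_left]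

section Pell

variable {d : ℤ}

theorem pell_x_sq (a : Solution₁ d) : (a ^ 2).x = 2 * a.x ^ 2 - 1 := by
  rw [sq, Solution₁.x_mul]
  linear_combination -a.prop

theorem odd_pell_x_pow {a : Solution₁ d} (ha : Odd a.x) (n : ℕ) : Odd (a ^ n).x := by
  have hdy : Even (d * a.y) := by
    have : Even (d * a.y ^ 2) := by
      rw [a.prop_y]
      exact ha.pow.sub_odd odd_one
    simpa [Int.even_mul, Int.even_pow] using this
  induction n with
  | zero => simp
  | succ n ih =>
    rw [pow_succ', Solution₁.x_mul, ← mul_assoc]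
    exact (ha.mul ih).add_even (hdy.mul_right _)

theorem pell_x_dvd_pell_x_pow_of_odd (a : Solution₁ d) {n : ℕ} (hn : Odd n) : a.x ∣ (a ^ n).x := by
  obtain ⟨m, rfl⟩ := hn
  induction m with
  | zero => simp
  | succ m ih =>
    have hy : a.x ∣ (a ^ 2).y := by
      rw [sq, Solution₁.y_mul]
      exact dvd_add (dvd_mul_right _ _) (dvd_mul_left _ _)
    rw [mul_add_one, add_right_comm, pow_add, Solution₁.x_mul]
    exact dvd_add (ih.mul_right _) ((hy.mul_left _).mul_left _)

theorem exists_abs_pell_x_eq_pell_x_pow {a : Solution₁ d} (ha : IsFundamental a) (u : Solution₁ d) :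
    ∃ n : ℕ, |u.x| = (a ^ n).x := by
  obtain ⟨w, hwx, hwy, hu⟩ := u.exists_pos_variant ha.d_pos
  obtain ⟨n, rfl⟩ := ha.eq_pow_of_nonneg hwx hwy
  refine ⟨n, ?_⟩
  rcases hu with rfl | rfl | rfl | rfl <;> simp [abs_of_pos hwx]

theorem exists_abs_pell_x_eq_two_mul_sq_sub_one (hd₀ : 0 < d) (hd : ¬IsSquare d)
    {u v : Solution₁ d} (hu : Even u.x) (hv : Odd v.x) : ∃ s : ℤ, |v.x| = 2 * s ^ 2 - 1 := by
  obtain ⟨a, ha⟩ := IsFundamental.exists_of_not_isSquare hd₀ hd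
  obtain ⟨m, hm⟩ := exists_abs_pell_x_eq_pell_x_pow ha u
  obtain ⟨l, hl⟩ := exists_abs_pell_x_eq_pell_x_pow ha v
  rw [← even_abs, hm] at hu
  rw [← odd_abs, hl] at hv
  have hax : Even a.x := by
    by_contra hodd
    exact Int.not_even_iff_odd.2 (odd_pell_x_pow (Int.not_even_iff_odd.1 hodd) m) hu
  have hl_even : Even l := by
    by_contra hodd
    exact Int.not_even_iff_odd.2 hv
      (hax.trans_dvd (pell_x_dvd_pell_x_pow_of_odd a (Nat.not_even_iff_odd.1 hodd)))
  obtain ⟨r, rfl⟩ := hl_even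
  exact ⟨(a ^ r).x, by rw [hl, ← mul_two, pow_mul, pell_x_sq]⟩

end Pell

theorem isSquare_two_of_dvd_two_mul_sq_sub_one {b s : ℤ} (h : b ∣ 2 * s ^ 2 - 1) :
    IsSquare (2 : ZMod b.natAbs) := by
  have hs : (2 * s ^ 2 - 1 : ZMod b.natAbs) = 0 := by
    exact_mod_cast (ZMod.intCast_zmod_eq_zero_iff_dvd _ _).2 (Int.natAbs_dvd.2 h)
  exact ⟨2 * s, by linear_combination -2 * hs⟩

theorem pow_sub_one_mul_pow_sub_one_ne_sq_of_odd {a b : ℤ} (ha : Even a) (hb : b ≡ 3 [ZMOD 4])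
    {n : ℕ} (hn : Odd n) (x : ℤ) : (a ^ n - 1) * (b ^ n - 1) ≠ x ^ 2 := by
  intro h
  obtain ⟨i, hi⟩ : Odd (a ^ n - 1) := (ha.pow_of_ne_zero hn.pos.ne').sub_odd odd_one
  have hb' : b ^ n ≡ -1 [ZMOD 4] := by
    simpa [hn.neg_one_pow] using (hb.trans (by decide : 3 ≡ -1 [ZMOD 4])).pow n
  obtain ⟨j, hj⟩ := hb'.symm.dvd
  have hx : x * x = 4 * (2 * i * j - i + j - 1) + 2 := by
    rw [← sq, ← h, hi]
    linear_combination (2 * i + 1) * hj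
  exact Int.sq_ne_two_mod_four x (by omega)

theorem pow_sub_one_mul_pow_sub_one_ne_sq_of_even {a b x : ℤ} (ha : Even a) (hb : Odd b)
    (hb₂ : ¬IsSquare (2 : ZMod b.natAbs)) {n : ℕ} (hn : Even n) (hx : x ≠ 0) :
    (a ^ n - 1) * (b ^ n - 1) ≠ x ^ 2 := by
  obtain ⟨k, rfl⟩ := hn
  intro h
  have hprod : (a ^ (k + k) - 1) * (b ^ (k + k) - 1) ≠ 0 := h ▸ pow_ne_zero 2 hx
  have hk : k ≠ 0 := by
    rintro rfl
    simp at hprod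
  obtain ⟨d, y, z, hy, hz⟩ := exists_eq_mul_sq_of_mul_eq_sq h
  have hz_ne : d * z ^ 2 ≠ 0 := hz ▸ right_ne_zero_of_mul hprod
  rw [← mul_two, pow_mul] at hy hz
  have hd₀ : 0 < d := by
    have hb_ne : b ≠ 0 := by
      rintro rfl
      simp at hb
    have hbk : 0 < (b ^ k) ^ 2 := by positivity
    exact pos_of_mul_pos_left (by omega) (sq_nonneg z)
  have hd : ¬IsSquare d :=
    (exists_iff_not_isSquare hd₀).1 ⟨b ^ k, z, by linarith, by rintro rfl; simp at hz_ne⟩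
  obtain ⟨s, hs⟩ := exists_abs_pell_x_eq_two_mul_sq_sub_one hd₀ hd
    (u := .mk (a ^ k) y (by linarith)) (v := .mk (b ^ k) z (by linarith))
    (ha.pow_of_ne_zero hk) hb.pow
  refine hb₂ (isSquare_two_of_dvd_two_mul_sq_sub_one (s := s) ?_)
  rw [← hs, Solution₁.x_mk, dvd_abs]
  exact dvd_pow_self b hk

theorem stmt_4_general {a b x : ℤ} (ha : Even a) (hb : b ≡ 3 [ZMOD 4])
    (hb₂ : ¬IsSquare (2 : ZMod b.natAbs)) (n : ℕ) (hx : x ≠ 0) :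
    (a ^ n - 1) * (b ^ n - 1) ≠ x ^ 2 := by
  obtain hn | hn := n.even_or_odd
  · have hb_odd : Odd b := Int.odd_iff.2 (hb.of_mul_right 2 (n := 2))
    exact pow_sub_one_mul_pow_sub_one_ne_sq_of_even ha hb_odd hb₂ hn hx
  · exact pow_sub_one_mul_pow_sub_one_ne_sq_of_odd ha hb hn x

theorem stmt_4 :
    ¬ ∃ (n x : ℕ), 0 < n ∧ 0 < x ∧ (2 ^ n - 1) * (3 ^ n - 1) = x ^ 2 := by
  rintro ⟨n, x, -, hx, h⟩
  zify [Nat.one_le_two_pow, Nat.one_le_pow n 3 three_pos] at h hx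
  exact stmt_4_general even_two rfl (by decide) n hx.ne' h
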